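/- Let n ≥ 2 be an integer, λ ≤ 0, and 0 < ε ≤ 1/√π. Let f be the maximal solution of the profile ODE f''(r)/(1 + f'(r)²) = (r − (n−1)/r)·f'(r) − f(r) − λ·√(1 + f'(r)²) on [0, r_*) (C¹ on [0, r_*), C² on (0, r_*)) with f(0) = −λ + ε and f'(0) = 0, where r_* is the blow-up radius (lim_{r → r_*⁻} f'(r) = −∞). Then r_* > √(log(1/(√π·ε))). -/

import Mathlib

open Real Set Filter

/-- The profile ODE (2.7): `f''/(1+f'²) = (r - (n-1)/r) f' - f - λ √(1+f'²)` at the point `r`. -/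
def ProfileEq (n : ℕ) (lam : ℝ) (f : ℝ → ℝ) (r : ℝ) : Prop :=
  deriv (deriv f) r / (1 + (deriv f r) ^ 2) =
    (r - ((n : ℝ) - 1) / r) * deriv f r - f r - lam * Real.sqrt (1 + (deriv f r) ^ 2)

open scoped Topology

/-!
Put `θ = arctan f'`. Multiplied by `cos θ`, the profile ODE becomes the singular linear equation
`(sin θ)' = (r - (n - 1) / r) sin θ - (f cos θ + λ)`, with integrating factor
`r ^ (n - 1) exp (-r² / 2)`. Comparing with `r ^ n` by Cauchy's mean value theorem,
`sin θ(r) = -(r / n) exp ((r² - c²) / 2) (f(c) cos θ(c) + λ)` for some `c` in `(0, r)`.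
This forces `θ → 0` at the axis and then, since `f(0) + λ = ε > 0`, also `f' < 0` near the axis.
The sign of `f'` persists because `f'` and `θ'` solve a cooperative linear system. Hence `f ≤ f(0)`,
and the same formula gives `-sin θ(r) ≤ ε (r / n) exp (r² / 2)`. At the blow-up radius
`sin θ → -1`, so `n ≤ ε r_* exp (r_*² / 2) ≤ ε exp (r_*²)`.
-/

lemma mul_exp_sq_div_two_le_exp_sq (x : ℝ) : x * exp (x ^ 2 / 2) ≤ exp (x ^ 2) := by
  have hx : x ≤ exp (x ^ 2 / 2) := by
    nlinarith [add_one_le_exp (x ^ 2 / 2), sq_nonneg (x - 1)]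
  calc x * exp (x ^ 2 / 2) ≤ exp (x ^ 2 / 2) * exp (x ^ 2 / 2) := by gcongr
    _ = exp (x ^ 2) := by rw [← exp_add, add_halves]

lemma tendsto_rpow_nhdsGT_zero {p : ℝ} (hp : 0 < p) :
    Tendsto (fun x : ℝ ↦ x ^ p) (𝓝[>] 0) (𝓝 0) :=
  (tendsto_id.mono_left nhdsWithin_le_nhds).rpow_const_nhds_zero hp

lemma tendsto_rpow_mul_sin_nhdsGT_zero {p : ℝ} (hp : 0 < p) (θ : ℝ → ℝ) :
    Tendsto (fun x ↦ x ^ p * sin (θ x)) (𝓝[>] 0) (𝓝 0) := by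
  simpa only [mul_comm] using bdd_le_mul_tendsto_zero' 1
    (Eventually.of_forall fun x ↦ abs_sin_le_one (θ x)) (tendsto_rpow_nhdsGT_zero hp)

section SingularLinearODE

variable {σ h : ℝ → ℝ} {m R : ℝ}

lemma hasDerivAt_rpow_mul_exp_mul {r : ℝ} (hr : 0 < r)
    (hσ : HasDerivAt σ ((r - m / r) * σ r + h r) r) :
    HasDerivAt (fun x ↦ x ^ m * exp (-(x ^ 2 / 2)) * σ x)
      (r ^ m * exp (-(r ^ 2 / 2)) * h r) r := by
  have hexp : HasDerivAt (fun x : ℝ ↦ exp (-(x ^ 2 / 2))) (exp (-(r ^ 2 / 2)) * -r) r := by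
    simpa using (((hasDerivAt_id r).pow 2).div_const 2).neg.exp
  refine (((hasDerivAt_rpow_const (Or.inl hr.ne')).mul hexp).mul hσ).congr_deriv ?_
  rw [rpow_sub_one hr.ne', Pi.mul_apply]
  field_simp
  ring

lemma exists_eq_mul_exp_mul_of_hasDerivAt (hm : -1 < m)
    (hσ : ∀ x ∈ Ioo 0 R, HasDerivAt σ ((x - m / x) * σ x + h x) x)
    (hσ₀ : Tendsto (fun x ↦ x ^ m * σ x) (𝓝[>] 0) (𝓝 0)) {r : ℝ} (hr : r ∈ Ioo 0 R) :
    ∃ c ∈ Ioo 0 r, σ r = r / (m + 1) * exp ((r ^ 2 - c ^ 2) / 2) * h c := by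
  have hm₁ : 0 < m + 1 := by linarith
  have hderiv : ∀ x ∈ Ioc 0 r, HasDerivAt (fun x ↦ x ^ m * exp (-(x ^ 2 / 2)) * σ x)
      (x ^ m * exp (-(x ^ 2 / 2)) * h x) x := fun x hx ↦
    hasDerivAt_rpow_mul_exp_mul hx.1 (hσ x ⟨hx.1, hx.2.trans_lt hr.2⟩)
  have hpow : ∀ x ∈ Ioc 0 r, HasDerivAt (fun x : ℝ ↦ x ^ (m + 1)) ((m + 1) * x ^ m) x :=
    fun x hx ↦ by simpa using hasDerivAt_rpow_const (p := m + 1) (Or.inl hx.1.ne')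
  have hlim : Tendsto (fun x ↦ x ^ m * exp (-(x ^ 2 / 2)) * σ x) (𝓝[>] 0) (𝓝 0) := by
    have hexp : Continuous fun x : ℝ ↦ exp (-(x ^ 2 / 2)) := by fun_prop
    simpa [mul_right_comm] using hσ₀.mul ((hexp.tendsto 0).mono_left nhdsWithin_le_nhds)
  have hr_mem : r ∈ Ioc 0 r := ⟨hr.1, le_rfl⟩
  obtain ⟨c, hc, hratio⟩ := exists_ratio_hasDerivAt_eq_ratio_slope' _ _ hr.1 _ _
    (fun x hx ↦ hderiv x (Ioo_subset_Ioc_self hx)) (fun x hx ↦ hpow x (Ioo_subset_Ioc_self hx))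
    hlim (tendsto_rpow_nhdsGT_zero hm₁)
    (hderiv r hr_mem).continuousAt.continuousWithinAt
    (hpow r hr_mem).continuousAt.continuousWithinAt
  refine ⟨c, hc, ?_⟩
  have hrm : 0 < r ^ m := rpow_pos_of_pos hr.1 m
  have hcm : 0 < c ^ m := rpow_pos_of_pos hc.1 m
  simp only [sub_zero, rpow_add_one hr.1.ne', exp_neg] at hratio
  rw [sub_div, exp_sub]
  field_simp at hratio ⊢
  linarith

lemma tendsto_zero_of_hasDerivAt_of_eventually_abs_le (hm : -1 < m) (hR : 0 < R)
    (hσ : ∀ x ∈ Ioo 0 R, HasDerivAt σ ((x - m / x) * σ x + h x) x)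
    (hσ₀ : Tendsto (fun x ↦ x ^ m * σ x) (𝓝[>] 0) (𝓝 0)) {B : ℝ}
    (hB : ∀ᶠ x in 𝓝[>] 0, |h x| ≤ B) : Tendsto σ (𝓝[>] 0) (𝓝 0) := by
  obtain ⟨δ, hδ, hδB⟩ := mem_nhdsGT_iff_exists_Ioo_subset.1 hB
  have hbound : ∀ r ∈ Ioo 0 (min R δ), ‖σ r‖ ≤ r / (m + 1) * exp (r ^ 2 / 2) * B := by
    intro r hr
    obtain ⟨hrR, hrδ⟩ := lt_min_iff.1 hr.2
    obtain ⟨c, hc, hσr⟩ := exists_eq_mul_exp_mul_of_hasDerivAt hm hσ hσ₀ ⟨hr.1, hrR⟩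
    have hweight : 0 ≤ r / (m + 1) := div_nonneg hr.1.le (by linarith)
    rw [hσr, norm_mul, norm_of_nonneg (by positivity)]
    gcongr
    · exact sub_le_self _ (sq_nonneg c)
    · exact hδB ⟨hc.1, hc.2.trans hrδ⟩
  refine squeeze_zero_norm'
    (eventually_of_mem (Ioo_mem_nhdsGT (lt_min hR hδ)) hbound) ?_
  have hcont : Continuous fun r : ℝ ↦ r / (m + 1) * exp (r ^ 2 / 2) * B := by fun_prop
  simpa using (hcont.tendsto 0).mono_left nhdsWithin_le_nhds

end SingularLinearODE

lemma neg_of_cooperative_linear_system {u g p q s : ℝ → ℝ} {a b : ℝ}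
    (hu : ∀ x ∈ Icc a b, HasDerivAt u (p x * g x) x)
    (hg : ∀ x ∈ Icc a b, HasDerivAt g (q x * g x + s x * u x) x)
    (hp : ∀ x ∈ Icc a b, 0 ≤ p x) (hs : ∀ x ∈ Icc a b, 0 < s x)
    (hua : u a < 0) (hga : g a ≤ 0) : ∀ x ∈ Icc a b, u x < 0 := by
  by_contra! ⟨y, hy, huy⟩
  have hucont : ContinuousOn u (Icc a b) := fun x hx ↦ (hu x hx).continuousAt.continuousWithinAt
  have hcompact : IsCompact (Icc a b ∩ u ⁻¹' Ici 0) :=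
    isCompact_Icc.of_isClosed_subset
      (hucont.preimage_isClosed_of_isClosed isClosed_Icc isClosed_Ici) inter_subset_left
  obtain ⟨z, ⟨hz, huz⟩, hz_least⟩ := hcompact.exists_isLeast ⟨y, hy, huy⟩
  have hsub : Icc a z ⊆ Icc a b := Icc_subset_Icc_right hz.2
  have hu_neg : ∀ x ∈ Ico a z, u x < 0 := fun x hx ↦ not_le.1 fun hux ↦
    hx.2.not_ge (hz_least ⟨hsub (Ico_subset_Icc_self hx), hux⟩)
  -- `g` cannot cross `0` upwards before the first zero of `u`: where it vanishes, `g' = s u < 0`.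
  have hg_nonpos : ∀ x ∈ Icc a z, g x ≤ 0 := by
    refine image_le_of_deriv_right_lt_deriv_boundary (B := fun _ ↦ 0) (B' := fun _ ↦ 0)
      (fun x hx ↦ (hg x (hsub hx)).continuousAt.continuousWithinAt)
      (fun x hx ↦ (hg x (hsub (Ico_subset_Icc_self hx))).hasDerivWithinAt) hga
      (fun x ↦ hasDerivAt_const x 0) fun x hx hgx ↦ ?_
    rw [hgx, mul_zero, zero_add]
    exact mul_neg_of_pos_of_neg (hs x (hsub (Ico_subset_Icc_self hx))) (hu_neg x hx)
  have hanti : AntitoneOn u (Icc a z) :=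
    antitoneOn_of_hasDerivWithinAt_nonpos (convex_Icc a z) (hucont.mono hsub)
      (fun x hx ↦ (hu x (hsub (interior_subset hx))).hasDerivWithinAt) fun x hx ↦
        mul_nonpos_of_nonneg_of_nonpos (hp x (hsub (interior_subset hx)))
          (hg_nonpos x (interior_subset hx))
  have huza : u z ≤ u a := hanti (left_mem_Icc.2 hz.1) (right_mem_Icc.2 hz.1) hz.1
  exact (huza.trans_lt hua).not_ge huz

/-- The angle in `(-π/2, π/2)` between the tangent of the graph of `f` and the `r`-axis, in which
the profile ODE takes its simplest form. -/
noncomputable def slopeAngle (f : ℝ → ℝ) (r : ℝ) : ℝ := arctan (deriv f r)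

/-- The right-hand side of the profile ODE, which along a solution is the derivative of
`slopeAngle f`. -/
noncomputable def profileRHS (n : ℕ) (lam : ℝ) (f : ℝ → ℝ) (r : ℝ) : ℝ :=
  (r - ((n : ℝ) - 1) / r) * deriv f r - f r - lam * √(1 + deriv f r ^ 2)

lemma cos_slopeAngle_pos (f : ℝ → ℝ) (r : ℝ) : 0 < cos (slopeAngle f r) := cos_arctan_pos _

lemma cos_slopeAngle_mul_profileRHS (n : ℕ) (lam : ℝ) (f : ℝ → ℝ) (r : ℝ) :
    cos (slopeAngle f r) * profileRHS n lam f r =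
      (r - ((n : ℝ) - 1) / r) * sin (slopeAngle f r) - (f r * cos (slopeAngle f r) + lam) := by
  simp only [slopeAngle, profileRHS, cos_arctan, sin_arctan]
  field_simp
  ring

namespace ProfileEq

variable {n : ℕ} {lam r : ℝ} {f : ℝ → ℝ}

lemma hasDerivAt_deriv (h : ProfileEq n lam f r) (hf' : DifferentiableAt ℝ (deriv f) r) :
    HasDerivAt (deriv f) ((1 + deriv f r ^ 2) * profileRHS n lam f r) r := by
  have hpos : 0 < 1 + deriv f r ^ 2 := by positivity
  exact hf'.hasDerivAt.congr_deriv (((div_eq_iff hpos.ne').1 h).trans (mul_comm _ _))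

lemma hasDerivAt_slopeAngle (h : ProfileEq n lam f r) (hf' : DifferentiableAt ℝ (deriv f) r) :
    HasDerivAt (slopeAngle f) (profileRHS n lam f r) r := by
  refine (h.hasDerivAt_deriv hf').arctan.congr_deriv ?_
  field_simp

lemma hasDerivAt_sin_slopeAngle (h : ProfileEq n lam f r)
    (hf' : DifferentiableAt ℝ (deriv f) r) :
    HasDerivAt (fun x ↦ sin (slopeAngle f x))
      ((r - ((n : ℝ) - 1) / r) * sin (slopeAngle f r) + -(f r * cos (slopeAngle f r) + lam)) r :=
  (h.hasDerivAt_slopeAngle hf').sin.congr_deriv (cos_slopeAngle_mul_profileRHS n lam f r)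

lemma hasDerivAt_profileRHS (h : ProfileEq n lam f r) (hr : r ≠ 0)
    (hf : DifferentiableAt ℝ f r) (hf' : DifferentiableAt ℝ (deriv f) r) :
    HasDerivAt (profileRHS n lam f)
      (((r - ((n : ℝ) - 1) / r) * (1 + deriv f r ^ 2) - lam * deriv f r * √(1 + deriv f r ^ 2)) *
        profileRHS n lam f r + ((n : ℝ) - 1) / r ^ 2 * deriv f r) r := by
  have hu := h.hasDerivAt_deriv hf'
  have hcoeff : HasDerivAt (fun x : ℝ ↦ x - ((n : ℝ) - 1) / x) (1 + ((n : ℝ) - 1) / r ^ 2) r := by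
    refine ((hasDerivAt_id r).sub ((hasDerivAt_const r ((n : ℝ) - 1)).div (hasDerivAt_id r) hr))
      |>.congr_deriv ?_
    simp only [id]
    ring
  have hpos : 0 < 1 + deriv f r ^ 2 := by positivity
  have hsqrt : HasDerivAt (fun x ↦ √(1 + deriv f x ^ 2))
      (deriv f r * √(1 + deriv f r ^ 2) * profileRHS n lam f r) r := by
    refine (((hu.pow 2).const_add 1).sqrt hpos.ne').congr_deriv ?_
    simp only [Pi.pow_apply]
    field_simp
    rw [sq_sqrt hpos.le]
    ring
  refine (((hcoeff.mul hu).sub hf.hasDerivAt).sub (hsqrt.const_mul lam)).congr_deriv ?_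
  ring

end ProfileEq

/-- A solution of the profile ODE on `(0, R)` that extends continuously to the axis `r = 0`. -/
structure IsProfileSolution (n : ℕ) (lam : ℝ) (f : ℝ → ℝ) (R : ℝ) : Prop where
  continuousOn : ContinuousOn f (Ico 0 R)
  contDiffOn : ContDiffOn ℝ 2 f (Ioo 0 R)
  profileEq : ∀ r ∈ Ioo 0 R, ProfileEq n lam f r

namespace IsProfileSolution

variable {n : ℕ} {lam R r : ℝ} {f : ℝ → ℝ}

lemma differentiableAt (h : IsProfileSolution n lam f R) (hr : r ∈ Ioo 0 R) :
    DifferentiableAt ℝ f r :=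
  (h.contDiffOn.differentiableOn (by norm_num)).differentiableAt (isOpen_Ioo.mem_nhds hr)

lemma differentiableAt_deriv (h : IsProfileSolution n lam f R) (hr : r ∈ Ioo 0 R) :
    DifferentiableAt ℝ (deriv f) r :=
  ((h.contDiffOn.deriv_of_isOpen (m := 1) isOpen_Ioo (by norm_num)).differentiableOn
    (by norm_num)).differentiableAt (isOpen_Ioo.mem_nhds hr)

lemma hasDerivAt_sin_slopeAngle (h : IsProfileSolution n lam f R) (hr : r ∈ Ioo 0 R) :
    HasDerivAt (fun x ↦ sin (slopeAngle f x))
      ((r - ((n : ℝ) - 1) / r) * sin (slopeAngle f r) + -(f r * cos (slopeAngle f r) + lam)) r :=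
  (h.profileEq r hr).hasDerivAt_sin_slopeAngle (h.differentiableAt_deriv hr)

lemma tendsto_nhdsGT_zero (h : IsProfileSolution n lam f R) (hR : 0 < R) :
    Tendsto f (𝓝[>] 0) (𝓝 (f 0)) := by
  rw [← nhdsWithin_Ioo_eq_nhdsGT hR]
  exact (h.continuousOn 0 (left_mem_Ico.2 hR)).mono Ioo_subset_Ico_self

lemma exists_sin_slopeAngle_eq (h : IsProfileSolution n lam f R) (hn : 2 ≤ n)
    (hr : r ∈ Ioo 0 R) :
    ∃ c ∈ Ioo 0 r, sin (slopeAngle f r) =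
      -(r / n * exp ((r ^ 2 - c ^ 2) / 2) * (f c * cos (slopeAngle f c) + lam)) := by
  have hn' : (2 : ℝ) ≤ n := by exact_mod_cast hn
  simpa only [sub_add_cancel, mul_neg] using
    exists_eq_mul_exp_mul_of_hasDerivAt (m := n - 1) (by linarith)
      (fun x hx ↦ h.hasDerivAt_sin_slopeAngle hx)
      (tendsto_rpow_mul_sin_nhdsGT_zero (by linarith) _) hr

lemma tendsto_slopeAngle_nhdsGT_zero (h : IsProfileSolution n lam f R) (hn : 2 ≤ n)
    (hR : 0 < R) : Tendsto (slopeAngle f) (𝓝[>] 0) (𝓝 0) := by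
  have hn' : (2 : ℝ) ≤ n := by exact_mod_cast hn
  have hbound : ∀ᶠ x in 𝓝[>] 0, |-(f x * cos (slopeAngle f x) + lam)| ≤ |f 0| + 1 + |lam| := by
    filter_upwards [(h.tendsto_nhdsGT_zero hR).abs.eventually_le_const (lt_add_one |f 0|)]
      with x hx
    calc |-(f x * cos (slopeAngle f x) + lam)|
        ≤ |f x| * |cos (slopeAngle f x)| + |lam| := by
          rw [abs_neg, ← abs_mul]
          exact abs_add_le _ _
      _ ≤ |f x| * 1 + |lam| := by gcongr; exact abs_cos_le_one _
      _ ≤ |f 0| + 1 + |lam| := by linarith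
  have hsin := tendsto_zero_of_hasDerivAt_of_eventually_abs_le (m := n - 1) (by linarith) hR
    (fun x hx ↦ h.hasDerivAt_sin_slopeAngle hx)
    (tendsto_rpow_mul_sin_nhdsGT_zero (by linarith) _) hbound
  have harcsin := (continuous_arcsin.tendsto 0).comp hsin
  rw [arcsin_zero] at harcsin
  refine harcsin.congr fun x ↦ ?_
  obtain ⟨hlower, hupper⟩ := arctan_mem_Ioo (deriv f x)
  exact arcsin_sin hlower.le hupper.le

lemma eventually_deriv_neg (h : IsProfileSolution n lam f R) (hn : 2 ≤ n) (hR : 0 < R)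
    (hf₀ : -lam < f 0) : ∀ᶠ r in 𝓝[>] 0, deriv f r < 0 := by
  have hforcing : Tendsto (fun r ↦ f r * cos (slopeAngle f r) + lam) (𝓝[>] 0)
      (𝓝 (f 0 + lam)) := by
    have hcos := (continuous_cos.tendsto 0).comp (h.tendsto_slopeAngle_nhdsGT_zero hn hR)
    simpa using ((h.tendsto_nhdsGT_zero hR).mul hcos).add_const lam
  obtain ⟨δ, hδ, hpos⟩ := mem_nhdsGT_iff_exists_Ioo_subset.1
    (hforcing.eventually_const_lt (neg_lt_iff_pos_add.1 hf₀))
  filter_upwards [Ioo_mem_nhdsGT (lt_min hR hδ)] with r hr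
  obtain ⟨hrR, hrδ⟩ := lt_min_iff.1 hr.2
  obtain ⟨c, hc, hsin⟩ := h.exists_sin_slopeAngle_eq hn ⟨hr.1, hrR⟩
  have hforcing_pos : 0 < f c * cos (slopeAngle f c) + lam := hpos ⟨hc.1, hc.2.trans hrδ⟩
  have hr₀ : 0 < r := hr.1
  refine sin_arctan_lt_zero.1 (hsin.trans_lt (neg_neg_of_pos ?_))
  positivity

lemma exists_deriv_neg_and_profileRHS_neg (h : IsProfileSolution n lam f R) (hn : 2 ≤ n)
    (hf₀ : -lam < f 0) (hr : r ∈ Ioo 0 R) :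
    ∃ c ∈ Ioo 0 r, deriv f c < 0 ∧ profileRHS n lam f c < 0 := by
  have hR : 0 < R := hr.1.trans hr.2
  obtain ⟨δ, hδ, hneg⟩ := mem_nhdsGT_iff_exists_Ioo_subset.1 (h.eventually_deriv_neg hn hR hf₀)
  obtain ⟨t, ht₀, ht⟩ := exists_between (lt_min hr.1 hδ)
  obtain ⟨htr, htδ⟩ := lt_min_iff.1 ht
  have hderiv : ∀ x ∈ Ioc 0 t, HasDerivAt (slopeAngle f) (profileRHS n lam f x) x := by
    intro x hx
    have hxR : x ∈ Ioo 0 R := ⟨hx.1, (hx.2.trans_lt htr).trans hr.2⟩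
    exact (h.profileEq x hxR).hasDerivAt_slopeAngle (h.differentiableAt_deriv hxR)
  obtain ⟨c, hc, hslope⟩ := exists_ratio_hasDerivAt_eq_ratio_slope' _ _ ht₀ id 1
    (fun x hx ↦ hderiv x (Ioo_subset_Ioc_self hx)) (fun x _ ↦ hasDerivAt_id x)
    (h.tendsto_slopeAngle_nhdsGT_zero hn hR) (tendsto_id.mono_left nhdsWithin_le_nhds)
    (hderiv t ⟨ht₀, le_rfl⟩).continuousAt.continuousWithinAt
    (tendsto_id.mono_left nhdsWithin_le_nhds)
  refine ⟨c, ⟨hc.1, hc.2.trans htr⟩, hneg ⟨hc.1, hc.2.trans htδ⟩, ?_⟩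
  have hangle : slopeAngle f t < 0 := arctan_lt_zero.2 (hneg ⟨ht₀, htδ⟩)
  simp only [sub_zero, Pi.one_apply, mul_one] at hslope
  exact neg_of_mul_neg_right (hslope.trans_lt hangle) ht₀.le

lemma deriv_neg (h : IsProfileSolution n lam f R) (hn : 2 ≤ n) (hf₀ : -lam < f 0)
    (hr : r ∈ Ioo 0 R) : deriv f r < 0 := by
  obtain ⟨c, hc, hderiv, hrhs⟩ := h.exists_deriv_neg_and_profileRHS_neg hn hf₀ hr
  have hn' : (2 : ℝ) ≤ n := by exact_mod_cast hn
  have hmem : ∀ x ∈ Icc c r, x ∈ Ioo 0 R := fun x hx ↦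
    ⟨hc.1.trans_le hx.1, hx.2.trans_lt hr.2⟩
  refine neg_of_cooperative_linear_system
    (fun x hx ↦ (h.profileEq x (hmem x hx)).hasDerivAt_deriv
      (h.differentiableAt_deriv (hmem x hx)))
    (fun x hx ↦ (h.profileEq x (hmem x hx)).hasDerivAt_profileRHS (hmem x hx).1.ne'
      (h.differentiableAt (hmem x hx)) (h.differentiableAt_deriv (hmem x hx)))
    (fun x _ ↦ by positivity) (fun x hx ↦ ?_) hderiv hrhs.le r ⟨hc.2.le, le_rfl⟩
  exact div_pos (by linarith) (pow_pos (hmem x hx).1 2)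

lemma antitoneOn (h : IsProfileSolution n lam f R) (hn : 2 ≤ n) (hf₀ : -lam < f 0) :
    AntitoneOn f (Ico 0 R) := by
  refine antitoneOn_of_deriv_nonpos (convex_Ico 0 R) h.continuousOn ?_ ?_ <;>
    rw [interior_Ico]
  · exact fun x hx ↦ (h.differentiableAt hx).differentiableWithinAt
  · exact fun x hx ↦ (h.deriv_neg hn hf₀ hx).le

lemma neg_sin_slopeAngle_le (h : IsProfileSolution n lam f R) (hn : 2 ≤ n)
    (hf₀ : -lam < f 0) (hf₀' : 0 ≤ f 0) (hr : r ∈ Ioo 0 R) :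
    -sin (slopeAngle f r) ≤ r / n * exp (r ^ 2 / 2) * (f 0 + lam) := by
  obtain ⟨c, hc, hsin⟩ := h.exists_sin_slopeAngle_eq hn hr
  have hr₀ : 0 < r := hr.1
  have hfc : f c ≤ f 0 := h.antitoneOn hn hf₀ (left_mem_Ico.2 (hr.1.trans hr.2))
    ⟨hc.1.le, hc.2.trans hr.2⟩ hc.1.le
  have hforcing : f c * cos (slopeAngle f c) ≤ f 0 :=
    (mul_le_mul_of_nonneg_right hfc (cos_slopeAngle_pos f c).le).trans
      (mul_le_of_le_one_right hf₀' (cos_le_one _))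
  have hf₀_add : 0 ≤ f 0 + lam := by linarith
  calc -sin (slopeAngle f r)
      = r / n * exp ((r ^ 2 - c ^ 2) / 2) * (f c * cos (slopeAngle f c) + lam) := by
        rw [hsin, neg_neg]
    _ ≤ r / n * exp ((r ^ 2 - c ^ 2) / 2) * (f 0 + lam) := by gcongr
    _ ≤ r / n * exp (r ^ 2 / 2) * (f 0 + lam) := by
        gcongr
        exact sub_le_self _ (sq_nonneg c)

end IsProfileSolution

lemma tendsto_sin_slopeAngle_of_tendsto_atBot {f : ℝ → ℝ} {l : Filter ℝ}
    (hf : Tendsto (deriv f) l atBot) : Tendsto (fun r ↦ sin (slopeAngle f r)) l (𝓝 (-1)) := by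
  have hangle : Tendsto (slopeAngle f) l (𝓝 (-(π / 2))) :=
    (tendsto_arctan_atBot.mono_right nhdsWithin_le_nhds).comp hf
  simpa [Function.comp_def] using (continuous_sin.tendsto _).comp hangle

theorem IsProfileSolution.natCast_le_mul_exp_of_tendsto_atBot {n : ℕ} {lam R : ℝ} {f : ℝ → ℝ}
    (h : IsProfileSolution n lam f R) (hn : 2 ≤ n) (hR : 0 < R) (hf₀ : -lam < f 0)
    (hf₀' : 0 ≤ f 0) (hblow : Tendsto (deriv f) (𝓝[<] R) atBot) :
    (n : ℝ) ≤ (f 0 + lam) * (R * exp (R ^ 2 / 2)) := by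
  have hcont : Continuous fun r : ℝ ↦ r / n * exp (r ^ 2 / 2) * (f 0 + lam) := by fun_prop
  have hone : 1 ≤ R / n * exp (R ^ 2 / 2) * (f 0 + lam) := by
    have hsin := (tendsto_sin_slopeAngle_of_tendsto_atBot hblow).neg
    rw [neg_neg] at hsin
    exact le_of_tendsto_of_tendsto hsin ((hcont.tendsto R).mono_left nhdsWithin_le_nhds)
      (eventually_of_mem (Ioo_mem_nhdsLT hR) fun r hr ↦ h.neg_sin_slopeAngle_le hn hf₀ hf₀' hr)
  have hn' : (0 : ℝ) < n := by exact_mod_cast (by omega : 0 < n)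
  calc (n : ℝ) ≤ n * (R / n * exp (R ^ 2 / 2) * (f 0 + lam)) := le_mul_of_one_le_right hn'.le hone
    _ = (f 0 + lam) * (R * exp (R ^ 2 / 2)) := by field_simp

theorem blow_up_radius_lower_bound_general {n : ℕ} (hn : 2 ≤ n) {lam ε R : ℝ} (hlam : lam ≤ ε)
    (hε : 0 < ε) (hR : 0 < R) {f : ℝ → ℝ} (h : IsProfileSolution n lam f R)
    (hf₀ : f 0 = -lam + ε) (hblow : Tendsto (deriv f) (𝓝[<] R) atBot) :
    log (1 / (√π * ε)) < R ^ 2 := by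
  have hn' : (2 : ℝ) ≤ n := by exact_mod_cast hn
  have hπ : 1 < √π := lt_sqrt_of_sq_lt (by linarith [pi_gt_three])
  have hε_eq : f 0 + lam = ε := by linarith
  have hexp : (2 : ℝ) ≤ ε * exp (R ^ 2) :=
    calc (2 : ℝ) ≤ ε * (R * exp (R ^ 2 / 2)) := hn'.trans <| hε_eq ▸
          h.natCast_le_mul_exp_of_tendsto_atBot hn hR (by linarith) (by linarith) hblow
      _ ≤ ε * exp (R ^ 2) := by gcongr; exact mul_exp_sq_div_two_le_exp_sq R
  rw [log_lt_iff_lt_exp (by positivity), div_lt_iff₀ (by positivity)]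
  calc (1 : ℝ) < √π * 2 := by linarith
    _ ≤ √π * (ε * exp (R ^ 2)) := by gcongr
    _ = exp (R ^ 2) * (√π * ε) := by ring

/-- Lemma 3.1: if `λ ≤ 0` and `0 < ε ≤ 1/√π`, the solution of the profile ODE with
`f(0) = -λ + ε`, `f'(0) = 0` has blow-up radius `r_* > √(log(1/(√π ε)))`. -/
theorem blow_up_radius_lower_bound
    (n : ℕ) (hn : 2 ≤ n) (lam ε : ℝ) (hlam : lam ≤ 0)
    (hε : 0 < ε) (hε' : ε ≤ 1 / Real.sqrt Real.pi)
    (f : ℝ → ℝ) (rstar : ℝ) (hrstar : 0 < rstar)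
    (hC1 : ContDiffOn ℝ 1 f (Ico 0 rstar))
    (hC2 : ContDiffOn ℝ 2 f (Ioo 0 rstar))
    (hode : ∀ r ∈ Ioo (0 : ℝ) rstar, ProfileEq n lam f r)
    (hf0 : f 0 = -lam + ε) (hf0' : deriv f 0 = 0)
    (hblow : Tendsto (deriv f) (nhdsWithin rstar (Iio rstar)) atBot) :
    rstar > Real.sqrt (Real.log (1 / (Real.sqrt Real.pi * ε))) :=
  (sqrt_lt' hrstar).2 <| blow_up_radius_lower_bound_general hn (hlam.trans hε.le) hε hrstar
    ⟨hC1.continuousOn, hC2, hode⟩ hf0 hblow
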